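/- arXiv:2301.05153 — 2 statements merged into one kernel-verified Lean document; each statement's English description precedes it below -/
import Mathlib

section
/- Fix ī ∈ {0,…,e−1} and let C be a core block. Then K_ī(C) ≤ d_ī(μ) for every multipartition μ lying in C. -/
/-!
Combinatorial framework for multipartitions, residues, β-sets, abacus levels,
weights, hubs, core blocks and Scopes-type moves, following Fayers and the paper.
Rows and columns of Young diagrams are indexed from 0, so the node in row `b`
and column `c` (0-based) of component `j` has residue `a j + c - b` mod `e`.
-/

open scoped Classical

namespace AK

/-- A partition, given by its (antitone, finitely supported) sequence of parts,
rows indexed from `0`. -/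
structure PartitionFun : Type where
  part : ℕ → ℕ
  antitone : Antitone part
  finite_support : ∃ N, ∀ b, N ≤ b → part b = 0

/-- The node in row `b`, column `c` (0-based) belongs to the Young diagram. -/
def PartitionFun.InDiag (lam : PartitionFun) (b c : ℕ) : Prop := c < lam.part b

/-- The node `(b,c)` is removable: deleting it leaves the diagram of a partition. -/
def PartitionFun.Removable (lam : PartitionFun) (b c : ℕ) : Prop :=
  lam.part b = c + 1 ∧ lam.part (b + 1) ≤ c

/-- The node `(b,c)` is addable: adjoining it gives the diagram of a partition. -/
def PartitionFun.Addable (lam : PartitionFun) (b c : ℕ) : Prop :=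
  lam.part b = c ∧ (b = 0 ∨ lam.part b < lam.part (b - 1))

/-- An `r`-multipartition. -/
abbrev Multipartition (r : ℕ) := Fin r → PartitionFun

/-- Nodes: `(b, c, j)` with row `b`, column `c`, component `j`. -/
abbrev Node (r : ℕ) := ℕ × ℕ × Fin r

/-- The Young diagram of a multipartition, as a set of nodes. -/
def diag {r : ℕ} (lam : Multipartition r) : Set (Node r) :=
  {x | (lam x.2.2).InDiag x.1 x.2.1}

/-- The size `n` of a multipartition of `n`. -/
noncomputable def msize {r : ℕ} (lam : Multipartition r) : ℕ :=
  Set.ncard (diag lam)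

/-- `c_i(λ)`: the number of nodes of residue `i` (mod `e`). -/
noncomputable def nodeCount {r : ℕ} (e : ℕ) (a : Fin r → ℤ) (lam : Multipartition r)
    (i : ℤ) : ℕ :=
  Set.ncard {x : Node r | (lam x.2.2).InDiag x.1 x.2.1 ∧
    (a x.2.2 + (x.2.1 : ℤ) - (x.1 : ℤ)) % (e : ℤ) = i % e}

/-- Number of removable nodes of residue `i` in component `j`. -/
noncomputable def removableCount {r : ℕ} (e : ℕ) (a : Fin r → ℤ) (lam : Multipartition r)
    (i : ℤ) (j : Fin r) : ℕ :=
  Set.ncard {p : ℕ × ℕ | (lam j).Removable p.1 p.2 ∧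
    (a j + (p.2 : ℤ) - (p.1 : ℤ)) % (e : ℤ) = i % e}

/-- Number of addable nodes of residue `i` in component `j`. -/
noncomputable def addableCount {r : ℕ} (e : ℕ) (a : Fin r → ℤ) (lam : Multipartition r)
    (i : ℤ) (j : Fin r) : ℕ :=
  Set.ncard {p : ℕ × ℕ | (lam j).Addable p.1 p.2 ∧
    (a j + (p.2 : ℤ) - (p.1 : ℤ)) % (e : ℤ) = i % e}

/-- `δ^j_i(λ)` = (removable `i`-nodes of component `j`) − (addable `i`-nodes of component `j`). -/
noncomputable def delta {r : ℕ} (e : ℕ) (a : Fin r → ℤ) (lam : Multipartition r)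
    (i : ℤ) (j : Fin r) : ℤ :=
  (removableCount e a lam i j : ℤ) - (addableCount e a lam i j : ℤ)

/-- The hub `δ_i(λ) = Σ_j δ^j_i(λ)`. -/
noncomputable def hub {r : ℕ} (e : ℕ) (a : Fin r → ℤ) (lam : Multipartition r) (i : ℤ) : ℤ :=
  ∑ j : Fin r, delta e a lam i j

/-- Two multipartitions have the same hub. -/
def SameHub {r : ℕ} (e : ℕ) (a : Fin r → ℤ) (lam mu : Multipartition r) : Prop :=
  ∀ i : ℤ, hub e a lam i = hub e a mu i

/-- `d_i(m) = min { δ^j_i(m) : 1 ≤ j ≤ r }`. -/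
noncomputable def dmin {r : ℕ} (e : ℕ) (a : Fin r → ℤ) (lam : Multipartition r) (i : ℤ) : ℤ :=
  sInf {x : ℤ | ∃ j : Fin r, delta e a lam i j = x}

/-- The weight `w(λ) = Σ_j c_{a_j}(λ) − (1/2) Σ_{i∈ℤ/eℤ} (c_i(λ) − c_{i+1}(λ))²`. -/
noncomputable def weight {r : ℕ} (e : ℕ) (a : Fin r → ℤ) (lam : Multipartition r) : ℚ :=
  (∑ j : Fin r, (nodeCount e a lam (a j) : ℚ)) -
    (1 / 2 : ℚ) * ∑ i ∈ Finset.range e,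
      ((nodeCount e a lam (i : ℤ) : ℚ) - (nodeCount e a lam ((i : ℤ) + 1) : ℚ)) ^ 2

/-- The β-set `B^j = {λ_b + a_j − b : b ≥ 1}` (here with rows indexed from 0). -/
def betaSet (aj : ℤ) (lam : PartitionFun) : Set ℤ :=
  {x | ∃ b : ℕ, x = (lam.part b : ℤ) + aj - ((b : ℤ) + 1)}

/-- A partition is an `e`-core: `β ∈ B` implies `β − e ∈ B`. -/
def IsECore (e : ℕ) (aj : ℤ) (lam : PartitionFun) : Prop :=
  ∀ x ∈ betaSet aj lam, x - (e : ℤ) ∈ betaSet aj lam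

/-- A multicore: all components are `e`-cores. -/
def IsMulticore {r : ℕ} (e : ℕ) (a : Fin r → ℤ) (lam : Multipartition r) : Prop :=
  ∀ j, IsECore e (a j) (lam j)

/-- `ℓ^a_{ij}(λ)`: the level of the lowest bead on runner `i`, i.e. the largest `x`
with `x·e + i` in the β-set. -/
noncomputable def level (e : ℕ) (aj : ℤ) (lam : PartitionFun) (i : ℕ) : ℤ :=
  sSup {x : ℤ | x * (e : ℤ) + (i : ℤ) ∈ betaSet aj lam}

/-- `γ^{jk}_i(λ) = ℓ^a_{ij}(λ) − ℓ^a_{ik}(λ)`. -/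
noncomputable def gamma {r : ℕ} (e : ℕ) (a : Fin r → ℤ) (lam : Multipartition r)
    (i : ℕ) (j k : Fin r) : ℤ :=
  level e (a j) (lam j) i - level e (a k) (lam k) i

/-- `γ^{jk}_{il}(λ) = γ^{jk}_i(λ) − γ^{jk}_l(λ)`. -/
noncomputable def gammaD {r : ℕ} (e : ℕ) (a : Fin r → ℤ) (lam : Multipartition r)
    (i l : ℕ) (j k : Fin r) : ℤ :=
  gamma e a lam i j k - gamma e a lam l j k

/-- Move a bead from runner `i` to runner `l` in the β-set `S`: replace the largest
element of `S` congruent to `i` mod `e` by the smallest integer congruent to `l`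
mod `e` not in `S`. -/
noncomputable def moveBead (e : ℕ) (i l : ℕ) (S : Set ℤ) : Set ℤ :=
  insert (sInf {x : ℤ | x % (e : ℤ) = (l : ℤ) % e ∧ x ∉ S})
    (S \ {sSup {x : ℤ | x % (e : ℤ) = (i : ℤ) % e ∧ x ∈ S}})

/-- The effect of `s^{jk}_{il}` on the tuple of β-sets: move a bead from runner `i`
to runner `l` in component `j`, and from runner `l` to runner `i` in component `k`. -/
noncomputable def swapSets {r : ℕ} (e i l : ℕ) (j k : Fin r) (S : Fin r → Set ℤ) :
    Fin r → Set ℤ :=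
  Function.update (Function.update S j (moveBead e i l (S j))) k
    (moveBead e l i (Function.update S j (moveBead e i l (S j)) k))

/-- `m' = s^{jk}_{il}(m)`, expressed via β-sets. -/
def IsSwap {r : ℕ} (e : ℕ) (a : Fin r → ℤ) (i l : ℕ) (j k : Fin r)
    (m m' : Multipartition r) : Prop :=
  ∀ j', betaSet (a j') (m' j') = swapSets e i l j k (fun t => betaSet (a t) (m t)) j'

/-- `λ` lies in a core block: its weight is minimal among the weights of all
multipartitions with the same hub. -/
def MinimalWeight {r : ℕ} (e : ℕ) (a : Fin r → ℤ) (lam : Multipartition r) : Prop :=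
  ∀ mu : Multipartition r, SameHub e a lam mu → weight e a lam ≤ weight e a mu

/-- `(b_0,…,b_{e−1})` is a base tuple for `mu` with respect to the multicharge `a'`
(congruent to `a` componentwise mod `e`): each `ℓ^{a'}_{ij}(mu)` is `b i` or `b i + 1`. -/
def IsBaseTuple {r : ℕ} (e : ℕ) (a : Fin r → ℤ) (mu : Multipartition r)
    (a' : Fin r → ℤ) (b : ℕ → ℤ) : Prop :=
  (∀ j, (e : ℤ) ∣ (a' j - a j)) ∧
    ∀ i < e, ∀ j, level e (a' j) (mu j) i = b i ∨ level e (a' j) (mu j) i = b i + 1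

/-- `K_i(C)` for the core block of `mu`: among all base tuples (over all admissible
multicharges), take `b i` maximal and then `b (i−1)` minimal, and set
`K_i = b_i − b_{i−1} − 1` for `i ≠ 0`, `K_0 = b_0 − b_{e−1} − 2`. -/
noncomputable def Kconst {r : ℕ} (e : ℕ) (a : Fin r → ℤ) (mu : Multipartition r)
    (i : ℕ) : ℤ :=
  let Bi : ℤ := sSup {x : ℤ | ∃ a' bt, IsBaseTuple e a mu a' bt ∧ bt i = x}
  let iprev : ℕ := if i = 0 then e - 1 else i - 1
  let Bp : ℤ := sInf {x : ℤ | ∃ a' bt, IsBaseTuple e a mu a' bt ∧ bt i = Bi ∧ bt iprev = x}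
  Bi - Bp - (if i = 0 then 2 else 1)

/-- The map `φ_i : ℤ → ℤ`. -/
def phiMap (e i : ℕ) (x : ℤ) : ℤ :=
  if x % (e : ℤ) = ((i : ℤ) - 1) % e then x + 1
  else if x % (e : ℤ) = (i : ℤ) % e then x - 1
  else x

/-- Lexicographic order on multipartitions: `λ > μ`. -/
def lexGT {r : ℕ} (lam mu : Multipartition r) : Prop :=
  ∃ j : Fin r, (∀ j' < j, (lam j').part = (mu j').part) ∧
    ∃ i : ℕ, (∀ i' < i, (lam j).part i' = (mu j).part i') ∧
      (mu j).part i < (lam j).part i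

/-- `x` is above `y`: `j < j'` or (`j = j'` and `b < b'`). -/
def NodeAbove {r : ℕ} (x y : Node r) : Prop :=
  x.2.2 < y.2.2 ∨ (x.2.2 = y.2.2 ∧ x.1 < y.1)

/-- The order on nodes: `x < y` iff `y` is above `x`. -/
def NodeLT {r : ℕ} (x y : Node r) : Prop := NodeAbove y x

/-- `N_A(λ)` = (addable `i`-nodes of `λ` below `A`) − (removable `i`-nodes of `λ` below `A`). -/
noncomputable def Nfac {r : ℕ} (e : ℕ) (a : Fin r → ℤ) (lam : Multipartition r)
    (i : ℤ) (A : Node r) : ℤ :=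
  (Set.ncard {y : Node r | (lam y.2.2).Addable y.1 y.2.1 ∧
      (a y.2.2 + (y.2.1 : ℤ) - (y.1 : ℤ)) % (e : ℤ) = i % e ∧ NodeAbove A y} : ℤ) -
  (Set.ncard {y : Node r | (lam y.2.2).Removable y.1 y.2.1 ∧
      (a y.2.2 + (y.2.1 : ℤ) - (y.1 : ℤ)) % (e : ℤ) = i % e ∧ NodeAbove A y} : ℤ)

/-- `lam` is obtained from `mu` by adding one `e`-rim hook to some component:
on β-sets, some `β ∈ B^j` with `β + e ∉ B^j` is replaced by `β + e`. -/
def AddRimHook {r : ℕ} (e : ℕ) (a : Fin r → ℤ) (mu lam : Multipartition r) : Prop :=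
  ∃ (j : Fin r) (β : ℤ), β ∈ betaSet (a j) (mu j) ∧ β + (e : ℤ) ∉ betaSet (a j) (mu j) ∧
    betaSet (a j) (lam j) = insert (β + (e : ℤ)) (betaSet (a j) (mu j) \ {β}) ∧
    ∀ j' ≠ j, betaSet (a j') (lam j') = betaSet (a j') (mu j')

/-- The number of inversions (length) of a permutation of `Fin d`. -/
noncomputable def permLength (d : ℕ) (σ : Equiv.Perm (Fin d)) : ℕ :=
  (Finset.univ.filter (fun p : Fin d × Fin d => p.1 < p.2 ∧ σ p.2 < σ p.1)).card

/-!
Cut off the `β`-sets of all components at a common low position. Multipartitions with the same hub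
then have the same number of beads on each runner of the abacus, and their weights differ by `r`
times the difference of their energies, the energy being the sum of the levels of all beads.

Let `μ₀` be a multicore of minimal weight. Moving beads cyclically between its components does not
lower the energy, so the differences `ℓ_{ij} - ℓ_{ik}` form a system of costs without negative
cycles. The potentials of this system are the shifts of the multicharge that bring the levels on
each runner within one of each other, and so yield base tuples.

Given a base tuple `b`, price a bead by its shifted level minus `b_i + 1`. The beads of `μ₀` are
nonpositive and its gaps nonnegative. A `μ` in the same block has the same total price as `μ₀`, so
it differs from `μ₀` only at positions of price zero; hence `μ` is a multicore with base tuple `b`.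
For a core, `δ^j_i` is the difference of the levels of runners `i` and `i - 1` (less one if
`i = 0`), which is at least `b_i - b_{i-1} - 1` (less one if `i = 0`).
-/

section Potentials

variable {V G : Type*} [AddCommMonoid G]

/-- The total cost of the steps of the path visiting the listed vertices in order, where a step
from `j` to `k` costs `c j k`. -/
def pathCost (c : V → V → G) : List V → G
  | [] => 0
  | [_] => 0
  | x :: y :: l => c x y + pathCost c (y :: l)

lemma pathCost_append_cons (c : V → V → G) (l₁ l₂ : List V) (x : V) :
    pathCost c (l₁ ++ x :: l₂) = pathCost c (l₁ ++ [x]) + pathCost c (x :: l₂) := by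
  induction l₁ with
  | nil => simp [pathCost]
  | cons y l₁ ih =>
    cases l₁ with
    | nil => simp [pathCost]
    | cons z l₁ =>
      simp only [List.cons_append, pathCost] at ih ⊢
      rw [ih, add_assoc]

lemma pathCost_eq_sum_zipWith (c : V → V → G) (x z : V) (l : List V) :
    pathCost c (x :: l ++ [z]) = (List.zipWith c (x :: l) (l ++ [z])).sum := by
  induction l generalizing x with
  | nil => simp [pathCost]
  | cons y l ih =>
    simp only [List.cons_append, pathCost, List.zipWith_cons_cons, List.sum_cons] at ih ⊢
    rw [ih]

lemma pathCost_cycle [Fintype V] [DecidableEq V] {c : V → V → G} (hc : ∀ j, c j j = 0) {x : V}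
    {l : List V} (hl : (x :: l).Nodup) :
    pathCost c (x :: l ++ [x]) = ∑ j, c j ((x :: l).formPerm j) := by
  have hrotate : l ++ [x] = (x :: l).map (x :: l).formPerm := by
    refine List.ext_getElem (by simp) fun n h₁ h₂ => ?_
    have hrot : l ++ [x] = (x :: l).rotate 1 := by simp
    simp only [List.getElem_map, List.formPerm_apply_getElem _ hl, hrot, List.getElem_rotate]
  have hsupport : ∑ j ∈ (x :: l).toFinset, c j ((x :: l).formPerm j) =
      ∑ j, c j ((x :: l).formPerm j) := by
    refine Finset.sum_subset (Finset.subset_univ _) fun j _ hj => ?_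
    rw [List.formPerm_apply_of_notMem (by simpa using hj), hc]
  rw [pathCost_eq_sum_zipWith, hrotate, List.zipWith_map_right, List.zipWith_self, ← hsupport,
    List.sum_toFinset _ hl]

variable [LinearOrder G]

lemma exists_minimal_pathCost [Finite V] (c : V → V → G) (j : V) :
    ∃ l : List V, (j :: l).Nodup ∧
      ∀ l', (j :: l').Nodup → pathCost c (j :: l) ≤ pathCost c (j :: l') := by
  have := Fintype.ofFinite V
  have hfinite : {l : List V | (j :: l).Nodup}.Finite :=
    (List.finite_length_le V (Fintype.card V)).subset fun l hl =>
      (Nat.le_succ _).trans hl.length_le_card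
  exact Set.exists_min_image _ (fun l => pathCost c (j :: l)) hfinite
    ⟨[], List.nodup_singleton j⟩

variable [IsOrderedAddMonoid G]

-- The potential of `j` is the least cost of a simple path starting at `j`.
lemma exists_potential [Fintype V] {c : V → V → G} (hc : ∀ j, c j j = 0)
    (hperm : ∀ σ : Equiv.Perm V, 0 ≤ ∑ j, c j (σ j)) :
    ∃ u : V → G, ∀ j k, u j ≤ c j k + u k := by
  choose path hnodup hmin using exists_minimal_pathCost c
  refine ⟨fun j => pathCost c (j :: path j), fun j k => ?_⟩
  change _ ≤ pathCost c (j :: k :: path k)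
  by_cases hj : j ∈ k :: path k
  · obtain ⟨l₁, l₂, hsplit⟩ := List.append_of_mem hj
    have hk := hnodup k
    rw [hsplit, List.nodup_append] at hk
    have hcycle : (j :: l₁).Nodup :=
      List.nodup_cons.2 ⟨fun hmem => hk.2.2 j hmem j (by simp) rfl, hk.1⟩
    calc pathCost c (j :: path j)
        ≤ pathCost c (j :: l₂) := hmin j l₂ hk.2.1
      _ ≤ pathCost c (j :: l₁ ++ [j]) + pathCost c (j :: l₂) := by
          rw [pathCost_cycle hc hcycle]
          exact le_add_of_nonneg_left (hperm _)
      _ = pathCost c (j :: k :: path k) := by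
          rw [hsplit, ← pathCost_append_cons, List.cons_append]
  · exact hmin j _ (List.nodup_cons.2 ⟨hj, hnodup k⟩)

lemma exists_potential_of_sum_le {ι : Type*} [Finite ι] [Nonempty ι] [Fintype V] [DecidableEq V]
    {ℓ : ι → V → ℤ}
    (h : ∀ (σ : Equiv.Perm V) (t : V → ι),
      ∑ j, ℓ (t j) (σ j) ≤ ∑ j, (ℓ (t j) j + if σ j = j then 0 else 1)) :
    ∃ u : V → ℤ, ∀ i j k, ℓ i j - u j ≤ ℓ i k - u k + 1 := by
  choose t ht using fun j k => Finite.exists_min fun i => ℓ i j - ℓ i k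
  obtain ⟨u, hu⟩ := exists_potential
    (c := fun j k => ℓ (t j k) j + (if k = j then 0 else 1) - ℓ (t j k) k) (by simp) fun σ => by
      rw [Finset.sum_sub_distrib, sub_nonneg]
      exact h σ fun j => t j (σ j)
  refine ⟨u, fun i j k => ?_⟩
  have hcost := hu k j
  have hmin := ht k j i
  split_ifs at hcost <;> linarith

lemma exists_eq_or_eq_add_one {ι : Type*} [Finite V] {f : ι → V → ℤ}
    (hf : ∀ i j k, f i j ≤ f i k + 1) :
    ∃ b : ι → ℤ, ∀ i j, f i j = b i ∨ f i j = b i + 1 := by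
  cases isEmpty_or_nonempty V
  · exact ⟨0, fun _ => isEmptyElim⟩
  choose k hk using fun i => Finite.exists_min (f i)
  refine ⟨fun i => f i (k i), fun i j => ?_⟩
  have hlower := hk i j
  have hupper := hf i j (k i)
  change f i j = f i (k i) ∨ f i j = f i (k i) + 1
  omega

end Potentials

section ResidueCounts

open Finset

lemma card_filter_range_modEq {e : ℕ} (he : 0 < e) (z i : ℤ) (p : ℕ) :
    (#{c ∈ range p | z + ((c : ℕ) : ℤ) ≡ i [ZMOD e]} : ℤ) =
      (z + p - 1 - i) / e - (z - 1 - i) / e := by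
  have hcard : #{c ∈ range p | z + ((c : ℕ) : ℤ) ≡ i [ZMOD e]} =
      #{x ∈ Ioc (z - 1) (z + p - 1) | x ≡ i [ZMOD e]} := by
    refine card_bij (fun c _ => z + c) (fun c hc => ?_) (by simp) fun x hx => ?_
    · simp only [mem_filter, mem_range, mem_Ioc] at hc ⊢
      exact ⟨by omega, hc.2⟩
    · simp only [mem_filter, mem_range, mem_Ioc] at hx ⊢
      have hx' : z + ((x - z).toNat : ℤ) = x := by omega
      exact ⟨(x - z).toNat, ⟨by omega, hx'.symm ▸ hx.2⟩, hx'⟩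
  have hfloor (x : ℤ) : ⌊((x : ℚ) - i) / ((e : ℤ) : ℚ)⌋ = (x - i) / e := by
    rw [← Int.cast_sub, Int.cast_natCast, Rat.floor_intCast_div_natCast]
  have hmono : (z - 1 - i) / (e : ℤ) ≤ (z + p - 1 - i) / e :=
    Int.ediv_le_ediv (by omega) (by omega)
  rw [hcard, Int.Ioc_filter_modEq_card _ _ (by omega), hfloor, hfloor]
  omega

/-- The number of beads of the configuration `s` lying on runner `i` of the abacus, that is, of
elements of `s` congruent to `i` modulo `e`. It is `ℤ`-valued because it enters differences. -/
def runnerCount (e : ℕ) (s : Finset ℤ) (i : ℤ) : ℤ := #{x ∈ s | x ≡ i [ZMOD e]}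

/-- The sum of the levels of the beads of the configuration `s`: the bead `q * e + i` on runner
`i < e` has level `q`. -/
def energy (e : ℕ) (s : Finset ℤ) : ℤ := ∑ x ∈ s, x / (e : ℤ)

/-- Two families of bead configurations have the same total number of beads on every runner. -/
def SameRunnerCounts {ι : Type*} [Fintype ι] (e : ℕ) (S T : ι → Finset ℤ) : Prop :=
  ∀ i : ℤ, ∑ j, runnerCount e (S j) i = ∑ j, runnerCount e (T j) i

lemma runnerCount_eq_sum (e : ℕ) (s : Finset ℤ) (i : ℤ) :
    runnerCount e s i = ∑ x ∈ s, if x ≡ i [ZMOD e] then 1 else 0 :=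
  natCast_card_filter _ _

lemma runnerCount_congr {e : ℕ} {i i' : ℤ} (h : i ≡ i' [ZMOD e]) (s : Finset ℤ) :
    runnerCount e s i = runnerCount e s i' :=
  congrArg (fun t : Finset ℤ => (#t : ℤ))
    (filter_congr fun _ _ => ⟨fun hx => hx.trans h, fun hx => hx.trans h.symm⟩)

lemma sum_emod_eq_sum_runnerCount_mul {e : ℕ} (he : 0 < e) (s : Finset ℤ) (g : ℤ → ℤ) :
    ∑ x ∈ s, g (x % e) = ∑ i ∈ Ico (0 : ℤ) e, runnerCount e s i * g i := by
  have hmaps : ∀ x ∈ s, x % (e : ℤ) ∈ Ico (0 : ℤ) e := fun x _ =>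
    mem_Ico.2 ⟨Int.emod_nonneg x (by omega), Int.emod_lt_of_pos x (by omega)⟩
  rw [← sum_fiberwise_of_maps_to hmaps]
  refine sum_congr rfl fun i hi => ?_
  have hi' : i % (e : ℤ) = i := Int.emod_eq_of_lt (mem_Ico.1 hi).1 (mem_Ico.1 hi).2
  rw [sum_congr rfl fun x hx => congrArg g (mem_filter.1 hx).2, sum_const, nsmul_eq_mul]
  simp only [runnerCount, Int.ModEq, hi']

lemma sum_runnerCount {e : ℕ} (he : 0 < e) (s : Finset ℤ) :
    ∑ i ∈ Ico (0 : ℤ) e, runnerCount e s i = #s := by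
  simpa using (sum_emod_eq_sum_runnerCount_mul he s fun _ => 1).symm

variable {ι : Type*} [Fintype ι] {e : ℕ} {S T : ι → Finset ℤ}

lemma SameRunnerCounts.sum_emod_eq (he : 0 < e) (h : SameRunnerCounts e S T) (g : ℤ → ℤ) :
    ∑ j, ∑ x ∈ S j, g (x % e) = ∑ j, ∑ x ∈ T j, g (x % e) := by
  calc ∑ j, ∑ x ∈ S j, g (x % e)
      = ∑ i ∈ Ico (0 : ℤ) e, (∑ j, runnerCount e (S j) i) * g i := by
        simp_rw [fun j => sum_emod_eq_sum_runnerCount_mul he (S j) g, sum_mul]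
        exact sum_comm
    _ = ∑ i ∈ Ico (0 : ℤ) e, (∑ j, runnerCount e (T j) i) * g i := by simp_rw [h _]
    _ = ∑ j, ∑ x ∈ T j, g (x % e) := by
        simp_rw [fun j => sum_emod_eq_sum_runnerCount_mul he (T j) g, sum_mul]
        exact sum_comm

lemma SameRunnerCounts.sum_sub_ediv (he : 0 < e) (h : SameRunnerCounts e S T) (i : ℤ) :
    ∑ j, ∑ x ∈ S j, (x - i) / (e : ℤ) - ∑ j, ∑ x ∈ T j, (x - i) / (e : ℤ) =
      ∑ j, energy e (S j) - ∑ j, energy e (T j) := by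
  have hsplit (R : ι → Finset ℤ) : ∑ j, ∑ x ∈ R j, (x - i) / (e : ℤ) =
      ∑ j, energy e (R j) + ∑ j, ∑ x ∈ R j, (x % e - i) / (e : ℤ) := by
    simp_rw [energy, ← sum_add_distrib]
    refine sum_congr rfl fun j _ => sum_congr rfl fun x _ => ?_
    rw [add_comm, ← Int.add_mul_ediv_left _ _ (by omega)]
    congr 1
    linarith [Int.emod_add_mul_ediv x e]
  rw [hsplit S, hsplit T, h.sum_emod_eq he fun y => (y - i) / e, add_sub_add_right_eq_sub]

lemma SameRunnerCounts.sum_price_le (he : 0 < e) (h : SameRunnerCounts e S T)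
    (hcard : ∀ j, #(S j) = #(T j)) (henergy : ∑ j, energy e (S j) ≤ ∑ j, energy e (T j))
    (u : ι → ℤ) (g : ℤ → ℤ) :
    ∑ j, ∑ x ∈ S j, (x / e + u j - g (x % e)) ≤ ∑ j, ∑ x ∈ T j, (x / e + u j - g (x % e)) := by
  simp only [sum_sub_distrib, sum_add_distrib, sum_const, hcard, h.sum_emod_eq he g]
  simpa only [energy, add_le_add_iff_right, sub_le_sub_iff_right] using henergy

lemma eq_zero_of_mem_symmDiff {α : Type*} [DecidableEq α] {s t : Finset α} {p : α → ℤ}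
    (hs : ∀ x ∈ s, x ∉ t → 0 ≤ p x) (ht : ∀ x ∈ t, x ∉ s → p x ≤ 0)
    (hle : ∑ x ∈ s, p x ≤ ∑ x ∈ t, p x) {x : α} (hx : x ∈ symmDiff s t) : p x = 0 := by
  have hs' : ∀ x ∈ s \ t, 0 ≤ p x := fun x hx => hs x (mem_sdiff.1 hx).1 (mem_sdiff.1 hx).2
  have ht' : ∀ x ∈ t \ s, p x ≤ 0 := fun x hx => ht x (mem_sdiff.1 hx).1 (mem_sdiff.1 hx).2
  have hdiff : ∑ x ∈ s \ t, p x - ∑ x ∈ t \ s, p x = ∑ x ∈ s, p x - ∑ x ∈ t, p x :=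
    sum_sdiff_sub_sum_sdiff
  have hsum_s := sum_nonneg hs'
  have hsum_t := sum_nonpos ht'
  rcases mem_symmDiff.1 hx with hx | hx
  · exact (sum_eq_zero_iff_of_nonneg hs').1 (by linarith) x (mem_sdiff.2 hx)
  · exact (sum_eq_zero_iff_of_nonpos ht').1 (by linarith) x (mem_sdiff.2 hx)

end ResidueCounts

section Beads

open Finset Filter

variable {L a x : ℤ} {lam : PartitionFun}

/-- The `β`-number of row `b` (counted from `0`), so that `betaSet a lam` is the range of
`betaNumber a lam`. -/
def betaNumber (a : ℤ) (lam : PartitionFun) (b : ℕ) : ℤ := lam.part b + a - (b + 1)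

lemma mem_betaSet : x ∈ betaSet a lam ↔ ∃ b, betaNumber a lam b = x := by
  simp only [betaSet, betaNumber, Set.mem_ofPred_eq, eq_comm]

lemma betaNumber_mem (a : ℤ) (lam : PartitionFun) (b : ℕ) : betaNumber a lam b ∈ betaSet a lam :=
  mem_betaSet.2 ⟨b, rfl⟩

lemma betaNumber_strictAnti (a : ℤ) (lam : PartitionFun) : StrictAnti (betaNumber a lam) :=
  strictAnti_nat_of_succ_lt fun b => by
    have hpart := lam.antitone (Nat.le_add_right b 1)
    unfold betaNumber
    omega

/-- The position `L` lies so far down that rows `a - L` and beyond of `lam` are empty. The `β`-set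
then contains every position below `L`, and is determined by its part above `L`. -/
structure IsCutoff (L a : ℤ) (lam : PartitionFun) : Prop where
  le : L ≤ a
  part_eq_zero : ∀ b : ℕ, a - L ≤ b → lam.part b = 0

lemma eventually_isCutoff (a : ℤ) (lam : PartitionFun) : ∀ᶠ L in atBot, IsCutoff L a lam := by
  obtain ⟨N, hN⟩ := lam.finite_support
  filter_upwards [eventually_le_atBot (a - N)] with L hL
  exact ⟨by omega, fun b hb => hN b (by omega)⟩

lemma IsCutoff.betaNumber_eq (h : IsCutoff L a lam) {b : ℕ} (hb : a - L ≤ b) :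
    betaNumber a lam b = a - (b + 1) := by
  rw [betaNumber, h.part_eq_zero b hb, Nat.cast_zero, zero_add]

lemma IsCutoff.mem_betaSet_of_lt (h : IsCutoff L a lam) (hx : x < L) : x ∈ betaSet a lam := by
  have hL := h.le
  refine mem_betaSet.2 ⟨(a - 1 - x).toNat, ?_⟩
  rw [h.betaNumber_eq (by omega)]
  omega

/-- The finite set of elements of the `β`-set at or above the cutoff `L`, obtained from the first
`a - L` rows. -/
def beads (L a : ℤ) (lam : PartitionFun) : Finset ℤ :=
  (range (a - L).toNat).image (betaNumber a lam)

lemma IsCutoff.mem_beads (h : IsCutoff L a lam) :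
    x ∈ beads L a lam ↔ x ∈ betaSet a lam ∧ L ≤ x := by
  simp only [beads, mem_image, mem_range, mem_betaSet]
  constructor
  · rintro ⟨b, hb, rfl⟩
    exact ⟨⟨b, rfl⟩, by unfold betaNumber; omega⟩
  · rintro ⟨⟨b, rfl⟩, hL⟩
    refine ⟨b, ?_, rfl⟩
    by_contra hb
    have hbeta := h.betaNumber_eq (b := b) (by omega)
    omega

lemma card_beads (L a : ℤ) (lam : PartitionFun) : #(beads L a lam) = (a - L).toNat := by
  rw [beads, card_image_of_injective _ (betaNumber_strictAnti a lam).injective, card_range]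

lemma sum_beads (L a : ℤ) (lam : PartitionFun) (f : ℤ → ℤ) :
    ∑ x ∈ beads L a lam, f x = ∑ b ∈ range (a - L).toNat, f (betaNumber a lam b) :=
  sum_image (betaNumber_strictAnti a lam).injective.injOn

end Beads

section Weight

open Finset

variable {e r : ℕ} {a : Fin r → ℤ} {lam mu : Multipartition r} {L : ℤ}

/-- The bead configurations of all components of a multipartition, cut off at a common position
`L`. -/
abbrev multibeads (L : ℤ) (a : Fin r → ℤ) (lam : Multipartition r) (j : Fin r) : Finset ℤ :=
  beads L (a j) (lam j)

lemma nodeCount_eq_sum (he : 0 < e) (hL : ∀ j, IsCutoff L (a j) (lam j)) (i : ℤ) :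
    (nodeCount e a lam i : ℤ) =
      ∑ j, ∑ x ∈ multibeads L a lam j, (x - i) / (e : ℤ) -
        ∑ j, ∑ b ∈ range (a j - L).toNat, (a j - b - 1 - i) / (e : ℤ) := by
  let nodes : Finset (Σ _ : Fin r, Σ _ : ℕ, ℕ) :=
    univ.sigma fun j => (range (a j - L).toNat).sigma fun b =>
      {c ∈ range ((lam j).part b) | a j - b + ((c : ℕ) : ℤ) ≡ i [ZMOD e]}
  have hnodes : {x : Node r | (lam x.2.2).InDiag x.1 x.2.1 ∧
      (a x.2.2 + (x.2.1 : ℤ) - (x.1 : ℤ)) % (e : ℤ) = i % e} =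
      (fun p : Σ _ : Fin r, Σ _ : ℕ, ℕ => (p.2.1, p.2.2, p.1)) '' nodes := by
    ext ⟨b, c, j⟩
    simp only [nodes, PartitionFun.InDiag, Set.mem_ofPred_eq, Set.mem_image, mem_coe, mem_sigma,
      mem_univ, mem_range, mem_filter, true_and, Int.ModEq, sub_add_eq_add_sub]
    constructor
    · rintro ⟨hc, hres⟩
      refine ⟨⟨j, b, c⟩, ⟨?_, hc, hres⟩, rfl⟩
      change b < (a j - L).toNat
      by_contra hb
      have hzero := (hL j).part_eq_zero b (by omega)
      omega
    · rintro ⟨⟨j, b, c⟩, ⟨-, hc, hres⟩, ⟨⟩⟩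
      exact ⟨hc, hres⟩
  have hinj : Function.Injective fun p : Σ _ : Fin r, Σ _ : ℕ, ℕ => (p.2.1, p.2.2, p.1) := by
    rintro ⟨j, b, c⟩ ⟨j', b', c'⟩ h
    cases h
    rfl
  rw [nodeCount, hnodes, Set.ncard_image_of_injective _ hinj, Set.ncard_coe_finset, card_sigma]
  simp only [card_sigma, Nat.cast_sum, card_filter_range_modEq he, sum_sub_distrib, sum_beads]
  congr! 7
  unfold betaNumber
  ring

lemma nodeCount_sub (he : 0 < e) (hlam : ∀ j, IsCutoff L (a j) (lam j))
    (hmu : ∀ j, IsCutoff L (a j) (mu j))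
    (h : SameRunnerCounts e (multibeads L a lam) (multibeads L a mu)) (i : ℤ) :
    (nodeCount e a lam i : ℤ) - nodeCount e a mu i =
      ∑ j, energy e (multibeads L a lam j) - ∑ j, energy e (multibeads L a mu j) := by
  rw [nodeCount_eq_sum he hlam, nodeCount_eq_sum he hmu, sub_sub_sub_cancel_right,
    h.sum_sub_ediv he]

-- All the residue counts of `lam` and `mu` differ by the same amount, so the quadratic terms of
-- the two weights agree.
lemma weight_sub (he : 0 < e) (hlam : ∀ j, IsCutoff L (a j) (lam j))
    (hmu : ∀ j, IsCutoff L (a j) (mu j))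
    (h : SameRunnerCounts e (multibeads L a lam) (multibeads L a mu)) :
    weight e a lam - weight e a mu =
      r * ((∑ j, energy e (multibeads L a lam j) -
        ∑ j, energy e (multibeads L a mu j) : ℤ) : ℚ) := by
  have hcount (i : ℤ) : (nodeCount e a lam i : ℚ) = nodeCount e a mu i +
      ((∑ j, energy e (multibeads L a lam j) - ∑ j, energy e (multibeads L a mu j) : ℤ) : ℚ) := by
    rw [← nodeCount_sub he hlam hmu h i]
    push_cast
    ring
  simp only [weight, hcount, add_sub_add_right_eq_sub, sum_add_distrib, sum_const, card_univ,
    Fintype.card_fin, nsmul_eq_mul]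
  ring

end Weight

section Hub

open Finset

variable {e : ℕ}

lemma betaNumber_sub_one_mem_iff {a : ℤ} {lam : PartitionFun} {b : ℕ} :
    betaNumber a lam b - 1 ∈ betaSet a lam ↔ lam.part (b + 1) = lam.part b := by
  rw [mem_betaSet]
  constructor
  · rintro ⟨b', hb'⟩
    have hlt : b < b' := (betaNumber_strictAnti a lam).lt_iff_gt.1 (by omega)
    have hle := (betaNumber_strictAnti a lam).antitone (show b + 1 ≤ b' from hlt)
    have hpart := lam.antitone (Nat.le_add_right b 1)
    unfold betaNumber at hb' hle
    omega
  · intro hpart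
    refine ⟨b + 1, ?_⟩
    unfold betaNumber
    omega

lemma betaNumber_add_one_mem_iff {a : ℤ} {lam : PartitionFun} {b : ℕ} :
    betaNumber a lam b + 1 ∈ betaSet a lam ↔ b ≠ 0 ∧ lam.part (b - 1) = lam.part b := by
  rw [mem_betaSet]
  constructor
  · rintro ⟨b', hb'⟩
    have hlt : b' < b := (betaNumber_strictAnti a lam).lt_iff_gt.1 (by omega)
    have hle := (betaNumber_strictAnti a lam).antitone (Nat.le_sub_one_of_lt hlt)
    have hpart := lam.antitone (Nat.sub_le b 1)
    unfold betaNumber at hb' hle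
    omega
  · rintro ⟨hb, hpart⟩
    refine ⟨b - 1, ?_⟩
    unfold betaNumber
    omega

variable {r : ℕ} {a : Fin r → ℤ} {lam mu : Multipartition r} {L : ℤ}

lemma removableCount_eq_ncard (e : ℕ) (a : Fin r → ℤ) (lam : Multipartition r) (i : ℤ)
    (j : Fin r) :
    removableCount e a lam i j =
      {y | y ∈ betaSet (a j) (lam j) ∧ y - 1 ∉ betaSet (a j) (lam j) ∧ y ≡ i [ZMOD e]}.ncard := by
  have hnode {b c : ℕ} (h : (lam j).Removable b c) :
      a j + (c : ℤ) - b = betaNumber (a j) (lam j) b := by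
    have := h.1
    unfold betaNumber
    omega
  rw [removableCount, ← Set.InjOn.ncard_image (f := fun p : ℕ × ℕ => a j + (p.2 : ℤ) - p.1)]
  · congr 1
    ext y
    constructor
    · rintro ⟨⟨b, c⟩, ⟨hrem, hres⟩, rfl⟩
      have hpart : (lam j).part b = c + 1 := hrem.1
      have hnext : (lam j).part (b + 1) ≤ c := hrem.2
      refine ⟨?_, ?_, hres⟩ <;> simp only [hnode hrem, betaNumber_mem, betaNumber_sub_one_mem_iff]
      omega
    · rintro ⟨hy, hpred, hres⟩
      obtain ⟨b, rfl⟩ := mem_betaSet.1 hy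
      rw [betaNumber_sub_one_mem_iff] at hpred
      have hpart := (lam j).antitone (Nat.le_add_right b 1)
      have hrem : (lam j).Removable b ((lam j).part b - 1) := ⟨by omega, by omega⟩
      refine ⟨(b, (lam j).part b - 1), ⟨hrem, ?_⟩, hnode hrem⟩
      simpa only [hnode hrem, Int.ModEq] using hres
  · rintro ⟨b, c⟩ ⟨h, -⟩ ⟨b', c'⟩ ⟨h', -⟩ heq
    simp only [hnode h, hnode h'] at heq
    obtain rfl := (betaNumber_strictAnti _ _).injective heq
    exact Prod.ext rfl (Nat.succ.inj (h.1.symm.trans h'.1))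

lemma addableCount_eq_ncard (e : ℕ) (a : Fin r → ℤ) (lam : Multipartition r) (i : ℤ)
    (j : Fin r) :
    addableCount e a lam i j =
      {y | y ∉ betaSet (a j) (lam j) ∧ y - 1 ∈ betaSet (a j) (lam j) ∧ y ≡ i [ZMOD e]}.ncard := by
  have hnode {b c : ℕ} (h : (lam j).Addable b c) :
      a j + (c : ℤ) - b = betaNumber (a j) (lam j) b + 1 := by
    have := h.1
    unfold betaNumber
    omega
  rw [addableCount, ← Set.InjOn.ncard_image (f := fun p : ℕ × ℕ => a j + (p.2 : ℤ) - p.1)]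
  · congr 1
    ext y
    constructor
    · rintro ⟨⟨b, c⟩, ⟨hadd, hres⟩, rfl⟩
      have hprev : b = 0 ∨ (lam j).part b < (lam j).part (b - 1) := hadd.2
      refine ⟨?_, ?_, hres⟩ <;>
        simp only [hnode hadd, betaNumber_mem, betaNumber_add_one_mem_iff, add_sub_cancel_right]
      omega
    · rintro ⟨hy, hpred, hres⟩
      obtain ⟨b, hb⟩ := mem_betaSet.1 hpred
      obtain rfl : y = betaNumber (a j) (lam j) b + 1 := by omega
      rw [betaNumber_add_one_mem_iff] at hy
      have hpart := (lam j).antitone (Nat.sub_le b 1)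
      have hadd : (lam j).Addable b ((lam j).part b) := ⟨rfl, by omega⟩
      refine ⟨(b, (lam j).part b), ⟨hadd, ?_⟩, hnode hadd⟩
      simpa only [hnode hadd, Int.ModEq] using hres
  · rintro ⟨b, c⟩ ⟨h, -⟩ ⟨b', c'⟩ ⟨h', -⟩ heq
    simp only [hnode h, hnode h', add_left_inj] at heq
    obtain rfl := (betaNumber_strictAnti _ _).injective heq
    exact Prod.ext rfl (h.1.symm.trans h'.1)

lemma runnerCount_sdiff_sub (s t : Finset ℤ) (i : ℤ) :
    runnerCount e (s \ t) i - runnerCount e (t \ s) i = runnerCount e s i - runnerCount e t i := by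
  simp only [runnerCount_eq_sum, sum_sdiff_sub_sum_sdiff]

lemma runnerCount_insert_image_add_one {s : Finset ℤ} (hs : L - 1 ∉ s) (i : ℤ) :
    runnerCount e (insert L (s.image (· + 1))) i =
      runnerCount e s (i - 1) + if L ≡ i [ZMOD e] then 1 else 0 := by
  have hshift (x : ℤ) : x + 1 ≡ i [ZMOD e] ↔ x ≡ i - 1 [ZMOD e] :=
    ⟨fun h => by simpa using h.sub_right 1, fun h => by simpa using h.add_right 1⟩
  have hL : L ∉ s.image (· + 1) := by
    rintro hmem
    obtain ⟨x, hx, rfl⟩ := mem_image.1 hmem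
    exact hs (by simpa using hx)
  rw [runnerCount_eq_sum, sum_insert hL, sum_image fun _ _ _ _ h => add_right_cancel h,
    runnerCount_eq_sum, add_comm]
  simp only [hshift]

lemma IsCutoff.mem_insert_image_add_one {a x : ℤ} {lam : PartitionFun} (h : IsCutoff L a lam) :
    x ∈ insert L ((beads L a lam).image (· + 1)) ↔ x - 1 ∈ betaSet a lam ∧ L ≤ x := by
  have himage : x ∈ (beads L a lam).image (· + 1) ↔ x - 1 ∈ beads L a lam := by
    simp only [mem_image, ← eq_sub_iff_add_eq, exists_eq_right]
  rw [mem_insert, himage, h.mem_beads]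
  constructor
  · rintro (rfl | hx)
    · exact ⟨h.mem_betaSet_of_lt (by omega), le_rfl⟩
    · exact ⟨hx.1, by omega⟩
  · rintro ⟨hx, hL⟩
    rcases hL.eq_or_lt with rfl | hlt
    · exact Or.inl rfl
    · exact Or.inr ⟨hx, by omega⟩

lemma delta_eq {j : Fin r} (h : IsCutoff L (a j) (lam j)) (i : ℤ) :
    delta e a lam i j = runnerCount e (beads L (a j) (lam j)) i -
      runnerCount e (beads L (a j) (lam j)) (i - 1) - if L ≡ i [ZMOD e] then 1 else 0 := by
  let s := beads L (a j) (lam j)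
  let t := insert L (s.image (· + 1))
  have hmem_s (y : ℤ) : y ∈ s ↔ y ∈ betaSet (a j) (lam j) ∧ L ≤ y := h.mem_beads
  have hmem_t (y : ℤ) : y ∈ t ↔ y - 1 ∈ betaSet (a j) (lam j) ∧ L ≤ y :=
    h.mem_insert_image_add_one
  have hremovable : (removableCount e a lam i j : ℤ) = runnerCount e (s \ t) i := by
    rw [removableCount_eq_ncard, runnerCount, ← Set.ncard_coe_finset]
    congr 2
    ext y
    simp only [coe_filter, mem_sdiff, hmem_s, hmem_t, Set.mem_ofPred_eq]
    have hlow (hy : y < L) := h.mem_betaSet_of_lt (x := y - 1) (by omega)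
    grind
  have haddable : (addableCount e a lam i j : ℤ) = runnerCount e (t \ s) i := by
    rw [addableCount_eq_ncard, runnerCount, ← Set.ncard_coe_finset]
    congr 2
    ext y
    simp only [coe_filter, mem_sdiff, hmem_s, hmem_t, Set.mem_ofPred_eq]
    have hlow (hy : y < L) := h.mem_betaSet_of_lt hy
    grind
  have hpred : L - 1 ∉ s := fun hmem => (sub_one_lt L).not_ge ((hmem_s _).1 hmem).2
  rw [delta, hremovable, haddable, runnerCount_sdiff_sub, runnerCount_insert_image_add_one hpred,
    sub_add_eq_sub_sub]

lemma sameHub_iff (he : 0 < e) (hlam : ∀ j, IsCutoff L (a j) (lam j))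
    (hmu : ∀ j, IsCutoff L (a j) (mu j)) :
    SameHub e a lam mu ↔ SameRunnerCounts e (multibeads L a lam) (multibeads L a mu) := by
  simp only [SameHub, hub, fun i j => delta_eq (e := e) (hlam j) i,
    fun i j => delta_eq (e := e) (hmu j) i, sum_sub_distrib, sub_left_inj]
  refine ⟨fun h => ?_, fun h i => by rw [h i, h (i - 1)]⟩
  let diff (i : ℤ) : ℤ :=
    ∑ j, runnerCount e (multibeads L a lam j) i - ∑ j, runnerCount e (multibeads L a mu j) i
  have hdiff : Function.Periodic diff 1 := fun i => by
    have := h (i + 1)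
    simp only [add_sub_cancel_right] at this
    simp only [diff]
    linarith
  have hconst (i : ℤ) : diff i = diff 0 := by simpa using hdiff.int_mul i 0
  have hsum : ∑ i ∈ Ico (0 : ℤ) e, diff i = 0 := by
    simp only [diff, sum_sub_distrib]
    rw [sum_comm, sum_comm (s := Ico (0 : ℤ) e)]
    simp only [sum_runnerCount he, card_beads, sub_self]
  simp only [hconst, sum_const, Int.card_Ico, sub_zero, Int.toNat_natCast, nsmul_eq_mul,
    mul_eq_zero, Nat.cast_eq_zero, he.ne', false_or] at hsum
  exact fun i => sub_eq_zero.1 ((hconst i).trans hsum)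

lemma MinimalWeight.sum_energy_le (he : 0 < e) (hmin : MinimalWeight e a lam)
    (hlam : ∀ j, IsCutoff L (a j) (lam j)) (hmu : ∀ j, IsCutoff L (a j) (mu j))
    (h : SameRunnerCounts e (multibeads L a lam) (multibeads L a mu)) :
    ∑ j, energy e (multibeads L a lam j) ≤ ∑ j, energy e (multibeads L a mu j) := by
  obtain rfl | hr := r.eq_zero_or_pos
  · simp
  have hweight := hmin mu ((sameHub_iff he hlam hmu).2 h)
  rw [← sub_nonpos, weight_sub he hlam hmu h] at hweight
  have hdiff := nonpos_of_mul_nonpos_right hweight (Nat.cast_pos.2 hr)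
  exact sub_nonpos.1 (Int.cast_nonpos.1 hdiff)

end Hub

section Realization

open Finset

variable {L a x y : ℤ} {lam : PartitionFun} {T : Finset ℤ}

lemma card_filter_gt_lt_card_filter_gt_iff (hx : x ∈ T) :
    #{z ∈ T | x < z} < #{z ∈ T | y < z} ↔ y < x := by
  refine ⟨fun h => ?_, fun h => card_lt_card ?_⟩
  · by_contra! hxy
    exact h.not_ge (card_le_card (monotone_filter_right T fun _ _ => hxy.trans_lt))
  · have hsub : {z ∈ T | x < z} ⊆ {z ∈ T | y < z} := monotone_filter_right T fun _ _ => h.trans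
    exact (ssubset_iff_of_subset hsub).2 ⟨x, by simp [hx, h]⟩

lemma card_Ico_sdiff_eq (hT : ∀ z ∈ T, L ≤ z) (hx : x ∈ T) :
    (#(Ico L x \ T) : ℤ) = x - L + #{z ∈ T | x < z} + 1 - #T := by
  have hinter : Ico L x ∩ T = {z ∈ T | z < x} := by
    ext z
    simp only [mem_inter, mem_Ico, mem_filter]
    exact ⟨fun h => ⟨h.2, h.1.2⟩, fun h => ⟨⟨hT z h.1, h.2⟩, h.1⟩⟩
  have hsplit : #{z ∈ T | z < x} + (#{z ∈ T | x < z} + 1) = #T := by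
    have hge : {z ∈ T | ¬z < x} = insert x {z ∈ T | x < z} := by
      ext z
      simp only [mem_filter, mem_insert, not_lt, le_iff_eq_or_lt]
      grind
    rw [← card_filter_add_card_filter_not (s := T) (· < x), hge, card_insert_of_notMem (by simp)]
  have hcard := card_sdiff_add_card_inter (Ico L x) T
  rw [hinter, Int.card_Ico] at hcard
  have hLx := hT x hx
  omega

-- Row `b` has as many boxes as there are gaps of `T` lying below more than `b` elements of `T`.
lemma exists_beads_eq (ha : L ≤ a) (hT : ∀ x ∈ T, L ≤ x) (hcard : #T = (a - L).toNat) :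
    ∃ lam, IsCutoff L a lam ∧ beads L a lam = T := by
  let gaps (b : ℕ) : Finset ℤ := {y ∈ T.biUnion (Ico L) \ T | b < #{z ∈ T | y < z}}
  have hgaps (b : ℕ) (hb : #T ≤ b) : gaps b = ∅ :=
    filter_false_of_mem fun y _ => ((card_filter_le _ _).trans hb).not_gt
  let lam : PartitionFun :=
    { part := fun b => #(gaps b)
      antitone := fun _ _ hbb' => card_le_card (monotone_filter_right _ fun _ _ => hbb'.trans_lt)
      finite_support := ⟨#T, fun b hb => card_eq_zero.2 (hgaps b hb)⟩ }
  refine ⟨lam, ⟨ha, fun b hb => card_eq_zero.2 (hgaps b (by omega))⟩, ?_⟩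
  refine (eq_of_subset_of_card_le (fun x hx => ?_) (by rw [card_beads, hcard])).symm
  have hgaps_x : gaps #{z ∈ T | x < z} = Ico L x \ T := by
    ext y
    simp only [gaps, mem_filter, mem_sdiff, mem_biUnion,
      card_filter_gt_lt_card_filter_gt_iff hx, mem_Ico]
    grind
  refine mem_image.2 ⟨#{z ∈ T | x < z}, mem_range.2 (hcard ▸ card_lt_card ?_), ?_⟩
  · exact filter_ssubset.2 ⟨x, hx, lt_irrefl x⟩
  · have hpart := card_Ico_sdiff_eq hT hx
    rw [← hgaps_x] at hpart
    change (#(gaps _) : ℤ) + a - _ = x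
    omega

lemma IsCutoff.exists_beads_eq_insert_erase (h : IsCutoff L a lam) (hx : x ∈ beads L a lam)
    (hy : y ∉ betaSet a lam) :
    ∃ lam', IsCutoff L a lam' ∧ beads L a lam' = insert y ((beads L a lam).erase x) := by
  have hy' : y ∉ beads L a lam := fun hmem => hy (h.mem_beads.1 hmem).1
  refine exists_beads_eq h.le (fun z hz => ?_) ?_
  · rcases mem_insert.1 hz with rfl | hz
    · exact not_lt.1 fun hlt => hy (h.mem_betaSet_of_lt hlt)
    · exact (h.mem_beads.1 (mem_of_mem_erase hz)).2
  · rw [card_insert_of_notMem fun hmem => hy' (mem_of_mem_erase hmem), card_erase_add_one hx,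
      card_beads]

end Realization

section Level

open Finset

variable {e : ℕ} {a x : ℤ} {lam : PartitionFun} {i : ℕ}

lemma ediv_mul_add_toNat_emod (he : 0 < e) (x : ℤ) : x / e * e + ((x % e).toNat : ℤ) = x := by
  rw [Int.toNat_of_nonneg (Int.emod_nonneg x (by omega)), mul_comm, Int.mul_ediv_add_emod]

lemma toNat_emod_lt (he : 0 < e) (x : ℤ) : (x % e).toNat < e := by
  have := Int.emod_lt_of_pos x (Int.natCast_pos.2 he)
  omega

lemma mul_add_ediv (hi : i < e) (q : ℤ) : (q * e + i) / e = q := by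
  rw [add_comm, Int.add_mul_ediv_right _ _ (by omega), Int.ediv_eq_zero_of_lt (by omega) (by omega),
    zero_add]

lemma mul_add_emod (hi : i < e) (q : ℤ) : (q * e + i) % e = i := by
  rw [add_comm, Int.add_mul_emod_self_right, Int.emod_eq_of_lt (by omega) (by omega)]

lemma mul_add_modEq (q i : ℤ) : q * e + i ≡ i [ZMOD e] :=
  Int.modEq_iff_dvd.2 ⟨-q, by ring⟩

lemma isGreatest_level (he : 0 < e) (a : ℤ) (lam : PartitionFun) (i : ℕ) :
    IsGreatest {q : ℤ | q * e + i ∈ betaSet a lam} (level e a lam i) := by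
  have hbdd : BddAbove {q : ℤ | q * e + i ∈ betaSet a lam} := by
    refine ⟨|betaNumber a lam 0|, fun q hq => ?_⟩
    obtain ⟨b, hb⟩ := mem_betaSet.1 hq
    have hle := (betaNumber_strictAnti a lam).antitone b.zero_le
    have habs := le_abs_self (betaNumber a lam 0)
    by_contra! hlt
    nlinarith [abs_nonneg (betaNumber a lam 0)]
  have hne : {q : ℤ | q * e + i ∈ betaSet a lam}.Nonempty := by
    obtain ⟨L, hL⟩ := (eventually_isCutoff a lam).exists
    refine ⟨(L - 1 - i) / e, hL.mem_betaSet_of_lt ?_⟩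
    have := Int.ediv_mul_le (L - 1 - i) (b := e) (by omega)
    omega
  exact ⟨Int.csSup_mem hne hbdd, fun q hq => le_csSup hbdd hq⟩

lemma level_add_mul (he : 0 < e) (a m : ℤ) (lam : PartitionFun) (i : ℕ) :
    level e (a + e * m) lam i = level e a lam i + m := by
  have hshift (x : ℤ) : x ∈ betaSet (a + e * m) lam ↔ x - e * m ∈ betaSet a lam := by
    simp only [mem_betaSet, betaNumber]
    exact exists_congr fun b => ⟨fun h => by linarith, fun h => by linarith⟩
  have hgreatest := isGreatest_level he a lam i
  refine (isGreatest_level he (a + e * m) lam i).unique ⟨?_, fun q hq => ?_⟩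
  · rw [Set.mem_ofPred_eq, hshift]
    have hlevel : level e a lam i * e + i ∈ betaSet a lam := hgreatest.1
    convert hlevel using 1
    ring
  · rw [Set.mem_ofPred_eq, hshift, show q * e + i - e * m = (q - m) * e + i by ring] at hq
    linarith [hgreatest.2 hq]

lemma IsECore.sub_mul_mem (hcore : IsECore e a lam) (hx : x ∈ betaSet a lam) (k : ℕ) :
    x - k * e ∈ betaSet a lam := by
  induction k with
  | zero => simpa using hx
  | succ k ih =>
    convert hcore _ ih using 1
    push_cast
    ring

lemma IsECore.mul_add_mem_iff (he : 0 < e) (hcore : IsECore e a lam) {q : ℤ} :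
    q * e + i ∈ betaSet a lam ↔ q ≤ level e a lam i := by
  have hgreatest := isGreatest_level he a lam i
  refine ⟨fun h => hgreatest.2 h, fun hq => ?_⟩
  convert hcore.sub_mul_mem hgreatest.1 (level e a lam i - q).toNat using 1
  rw [Int.toNat_of_nonneg (by omega)]
  ring

lemma IsECore.mem_betaSet_iff (he : 0 < e) (hcore : IsECore e a lam) :
    x ∈ betaSet a lam ↔ x / e ≤ level e a lam (x % e).toNat := by
  rw [← hcore.mul_add_mem_iff he, ediv_mul_add_toNat_emod he]

lemma IsCutoff.exists_move {L : ℤ} (h : IsCutoff L a lam) {i' : ℕ} (hi : i < e) (hi' : i' < e)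
    (hL : L ≤ level e a lam i' * e + i') :
    ∃ lam', IsCutoff L a lam' ∧
      (∀ z, runnerCount e (beads L a lam') z = runnerCount e (beads L a lam) z +
        ((if (i : ℤ) ≡ z [ZMOD e] then 1 else 0) - if (i' : ℤ) ≡ z [ZMOD e] then 1 else 0)) ∧
      energy e (beads L a lam') =
        energy e (beads L a lam) + (level e a lam i + 1 - level e a lam i') := by
  have he : 0 < e := by omega
  have hgreatest := isGreatest_level he a lam i
  have hlost : level e a lam i' * e + i' ∈ beads L a lam :=
    h.mem_beads.2 ⟨(isGreatest_level he a lam i').1, hL⟩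
  have hgained : (level e a lam i + 1) * e + i ∉ betaSet a lam := fun hmem =>
    (lt_add_one _).not_ge (hgreatest.2 hmem)
  obtain ⟨lam', hlam', hbeads⟩ := h.exists_beads_eq_insert_erase hlost hgained
  have hsum (f : ℤ → ℤ) : ∑ x ∈ beads L a lam', f x = ∑ x ∈ beads L a lam, f x +
      (f ((level e a lam i + 1) * e + i) - f (level e a lam i' * e + i')) := by
    rw [hbeads, sum_insert fun hmem => hgained (h.mem_beads.1 (mem_of_mem_erase hmem)).1,
      ← add_sum_erase _ f hlost]
    ring
  have hrunner (q z : ℤ) (k : ℕ) : q * e + k ≡ z [ZMOD e] ↔ (k : ℤ) ≡ z [ZMOD e] :=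
    ⟨(mul_add_modEq q k).symm.trans, (mul_add_modEq q k).trans⟩
  refine ⟨lam', hlam', fun z => ?_, ?_⟩
  · simp only [runnerCount_eq_sum, hsum, hrunner]
  · simp only [energy, hsum, mul_add_ediv hi, mul_add_ediv hi']

end Level

section BaseTuples

open Finset Filter

variable {e r : ℕ} {a : Fin r → ℤ} {mu : Multipartition r}

-- Component `j` gains a bead on runner `t j` from component `σ j`; minimality says that this
-- does not decrease the energy.
lemma MinimalWeight.sum_level_le (he : 0 < e) (hmin : MinimalWeight e a mu)
    (σ : Equiv.Perm (Fin r)) (t : Fin r → Fin e) :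
    ∑ j, level e (a (σ j)) (mu (σ j)) (t j) ≤
      ∑ j, (level e (a j) (mu j) (t j) + if σ j = j then 0 else 1) := by
  have hcutoff : ∀ᶠ L in atBot, ∀ j, IsCutoff L (a j) (mu j) ∧
      ∀ i : Fin e, L ≤ level e (a j) (mu j) i * e + i :=
    eventually_all.2 fun j => (eventually_isCutoff _ _).and <|
      eventually_all.2 fun i => eventually_le_atBot _
  obtain ⟨L, hL⟩ := hcutoff.exists
  have hmove (j : Fin r) : ∃ lam', IsCutoff L (a j) lam' ∧
      (∀ z, runnerCount e (beads L (a j) lam') z = runnerCount e (beads L (a j) (mu j)) z +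
        ((if ((t j : ℕ) : ℤ) ≡ z [ZMOD e] then 1 else 0) -
          if ((t (σ.symm j) : ℕ) : ℤ) ≡ z [ZMOD e] then 1 else 0)) ∧
      energy e (beads L (a j) lam') = energy e (beads L (a j) (mu j)) +
        ((level e (a j) (mu j) (t j) + if σ j = j then 0 else 1) -
          level e (a j) (mu j) (t (σ.symm j))) := by
    by_cases hj : σ j = j
    · have hj' : σ.symm j = j := (σ.symm_apply_eq).2 hj.symm
      refine ⟨mu j, (hL j).1, ?_, ?_⟩ <;> simp [hj, hj']
    · simpa only [hj, if_false] using
        (hL j).1.exists_move (t j).2 (t (σ.symm j)).2 ((hL j).2 (t (σ.symm j)))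
  choose nu hnu hcount henergy using hmove
  have hsame : SameRunnerCounts e (multibeads L a mu) (multibeads L a nu) := fun z => by
    simp only [hcount, sum_add_distrib, sum_sub_distrib]
    rw [Equiv.sum_comp σ.symm fun j => if ((t j : ℕ) : ℤ) ≡ z [ZMOD e] then (1 : ℤ) else 0,
      sub_self, add_zero]
  have hle := hmin.sum_energy_le he (fun j => (hL j).1) hnu hsame
  simp only [henergy, sum_add_distrib, sum_sub_distrib] at hle ⊢
  rw [← Equiv.sum_comp σ fun j => level e (a j) (mu j) (t (σ.symm j))] at hle
  simp only [Equiv.symm_apply_apply] at hle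
  linarith

lemma isBaseTuple_add_mul_iff (he : 0 < e) {m : Fin r → ℤ} {b : ℕ → ℤ} :
    IsBaseTuple e a mu (fun j => a j + e * m j) b ↔ ∀ i < e, ∀ j,
      level e (a j) (mu j) i + m j = b i ∨ level e (a j) (mu j) i + m j = b i + 1 := by
  simp only [IsBaseTuple, level_add_mul he, add_sub_cancel_left, dvd_mul_right, implies_true,
    true_and]

lemma IsBaseTuple.exists_eq_add_mul {a' : Fin r → ℤ} {b : ℕ → ℤ} (h : IsBaseTuple e a mu a' b) :
    ∃ m : Fin r → ℤ, a' = fun j => a j + e * m j := by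
  choose m hm using h.1
  exact ⟨m, funext fun j => by linarith [hm j]⟩

lemma MinimalWeight.exists_isBaseTuple (he : 0 < e) (hmin : MinimalWeight e a mu) :
    ∃ a' b, IsBaseTuple e a mu a' b := by
  have : Nonempty (Fin e) := ⟨⟨0, he⟩⟩
  obtain ⟨u, hu⟩ := exists_potential_of_sum_le
    (ℓ := fun (i : Fin e) (j : Fin r) => level e (a j) (mu j) i) (hmin.sum_level_le he)
  obtain ⟨b, hb⟩ := exists_eq_or_eq_add_one hu
  refine ⟨fun j => a j + e * -u j, fun i => if hi : i < e then b ⟨i, hi⟩ else 0, ?_⟩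
  rw [isBaseTuple_add_mul_iff he]
  intro i hi j
  simpa only [hi, dite_true, sub_eq_add_neg] using hb ⟨i, hi⟩ j

lemma IsBaseTuple.exists_apply_eq (he : 0 < e) {a' : Fin r → ℤ} {b : ℕ → ℤ}
    (h : IsBaseTuple e a mu a' b) (i : ℕ) (v : ℤ) :
    ∃ a'' b', IsBaseTuple e a mu a'' b' ∧ b' i = v := by
  obtain ⟨m, rfl⟩ := h.exists_eq_add_mul
  rw [isBaseTuple_add_mul_iff he] at h
  refine ⟨fun j => a j + e * (m j + (v - b i)), fun k => b k + (v - b i), ?_, by ring⟩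
  rw [isBaseTuple_add_mul_iff he]
  intro k hk j
  have := h k hk j
  omega

end BaseTuples

section Transfer

open Finset Filter

variable {e r : ℕ} {a : Fin r → ℤ} {lam mu : Multipartition r} {m : Fin r → ℤ} {b : ℕ → ℤ}

lemma IsBaseTuple.ediv_add_le_of_mem (he : 0 < e)
    (hbase : IsBaseTuple e a lam (fun j => a j + e * m j) b) (hcore : IsMulticore e a lam)
    {j : Fin r} {x : ℤ} (hx : x ∈ betaSet (a j) (lam j)) :
    x / e + m j ≤ b (x % e).toNat + 1 := by
  have hlevel := ((hcore j).mem_betaSet_iff he).1 hx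
  have := (isBaseTuple_add_mul_iff he).1 hbase _ (toNat_emod_lt he x) j
  omega

lemma IsBaseTuple.le_ediv_add_of_notMem (he : 0 < e)
    (hbase : IsBaseTuple e a lam (fun j => a j + e * m j) b) (hcore : IsMulticore e a lam)
    {j : Fin r} {x : ℤ} (hx : x ∉ betaSet (a j) (lam j)) :
    b (x % e).toNat + 1 ≤ x / e + m j := by
  have hlevel := mt ((hcore j).mem_betaSet_iff he).2 hx
  have := (isBaseTuple_add_mul_iff he).1 hbase _ (toNat_emod_lt he x) j
  omega

-- Price a bead `x` of component `j` at `x / e + m j - (b (x % e) + 1)`. Every bead of `lam` has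
-- nonpositive price and every gap nonnegative price, so `lam` minimises the total price; so does
-- `mu`, which therefore differs from `lam` only at positions of price zero.
lemma IsBaseTuple.mem_betaSet_iff_of_ne (he : 0 < e)
    (hbase : IsBaseTuple e a lam (fun j => a j + e * m j) b) (hcore : IsMulticore e a lam)
    (hhub : SameHub e a lam mu) (hmin : MinimalWeight e a mu) {j : Fin r} {x : ℤ}
    (hx : x / e + m j ≠ b (x % e).toNat + 1) :
    x ∈ betaSet (a j) (mu j) ↔ x ∈ betaSet (a j) (lam j) := by
  have hcutoff : ∀ᶠ L in atBot, (∀ j, IsCutoff L (a j) (lam j)) ∧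
      (∀ j, IsCutoff L (a j) (mu j)) ∧ L ≤ x :=
    (eventually_all.2 fun _ => eventually_isCutoff _ _).and <|
      (eventually_all.2 fun _ => eventually_isCutoff _ _).and (eventually_le_atBot x)
  obtain ⟨L, hlam, hmu, hLx⟩ := hcutoff.exists
  have hmem {nu : Multipartition r} (hnu : ∀ j, IsCutoff L (a j) (nu j)) (p : Σ _ : Fin r, ℤ) :
      p ∈ univ.sigma (multibeads L a nu) ↔ p.2 ∈ betaSet (a p.1) (nu p.1) ∧ L ≤ p.2 := by
    rw [mem_sigma, (hnu p.1).mem_beads, and_iff_right (mem_univ _)]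
  let price (p : Σ _ : Fin r, ℤ) : ℤ := p.2 / e + m p.1 - (b (p.2 % e).toNat + 1)
  have htotal : ∑ p ∈ univ.sigma (multibeads L a mu), price p ≤
      ∑ p ∈ univ.sigma (multibeads L a lam), price p := by
    have hsame : SameRunnerCounts e (multibeads L a mu) (multibeads L a lam) := fun z =>
      ((sameHub_iff he hlam hmu).1 hhub z).symm
    simp only [sum_sigma, price]
    exact hsame.sum_price_le he (fun j => by simp only [card_beads])
      (hmin.sum_energy_le he hmu hlam hsame) m fun y => b y.toNat + 1
  by_contra hne
  refine hx (sub_eq_zero.1 (eq_zero_of_mem_symmDiff (p := price) (x := ⟨j, x⟩)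
    (fun p hp hp' => ?_) (fun p hp _ => ?_) htotal ?_))
  · rw [hmem hmu] at hp
    rw [hmem hlam] at hp'
    exact sub_nonneg.2 (hbase.le_ediv_add_of_notMem he hcore fun h => hp' ⟨h, hp.2⟩)
  · exact sub_nonpos.2 (hbase.ediv_add_le_of_mem he hcore ((hmem hlam p).1 hp).1)
  · simp only [mem_symmDiff, hmem hmu, hmem hlam, hLx, and_true]
    tauto

lemma isECore_of_forall_bounds (he : 0 < e) {a m : ℤ} {lam : PartitionFun}
    (h : ∀ x : ℤ, (x / e + m ≤ b (x % e).toNat → x ∈ betaSet a lam) ∧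
      (x ∈ betaSet a lam → x / e + m ≤ b (x % e).toNat + 1)) : IsECore e a lam := by
  intro x hx
  have hle := (h x).2 hx
  refine (h (x - e)).1 ?_
  rw [Int.sub_ediv_of_dvd _ dvd_rfl, Int.ediv_self (by omega), Int.sub_emod_right]
  omega

lemma level_of_forall_bounds {a m : ℤ} {lam : PartitionFun}
    (h : ∀ x : ℤ, (x / e + m ≤ b (x % e).toNat → x ∈ betaSet a lam) ∧
      (x ∈ betaSet a lam → x / e + m ≤ b (x % e).toNat + 1)) {i : ℕ} (hi : i < e) :
    level e a lam i + m = b i ∨ level e a lam i + m = b i + 1 := by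
  have hrunner (q : ℤ) := h (q * e + i)
  simp only [mul_add_ediv hi, mul_add_emod hi, Int.toNat_natCast] at hrunner
  have hgreatest := isGreatest_level (Nat.zero_lt_of_lt hi) a lam i
  have hupper := (hrunner _).2 hgreatest.1
  have hlower := hgreatest.2 ((hrunner (b i - m)).1 (by omega))
  omega

lemma IsBaseTuple.isMulticore_and_isBaseTuple (he : 0 < e) {a' : Fin r → ℤ}
    (hbase : IsBaseTuple e a lam a' b) (hcore : IsMulticore e a lam) (hhub : SameHub e a lam mu)
    (hmin : MinimalWeight e a mu) : IsMulticore e a mu ∧ IsBaseTuple e a mu a' b := by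
  obtain ⟨m, rfl⟩ := hbase.exists_eq_add_mul
  have hbounds (j : Fin r) (x : ℤ) : (x / e + m j ≤ b (x % e).toNat → x ∈ betaSet (a j) (mu j)) ∧
      (x ∈ betaSet (a j) (mu j) → x / e + m j ≤ b (x % e).toNat + 1) := by
    have hbead := hbase.ediv_add_le_of_mem he hcore (j := j) (x := x)
    have hgap := hbase.le_ediv_add_of_notMem he hcore (j := j) (x := x)
    have hiff := hbase.mem_betaSet_iff_of_ne he hcore hhub hmin (j := j) (x := x)
    grind
  exact ⟨fun j => isECore_of_forall_bounds he (hbounds j),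
    (isBaseTuple_add_mul_iff he).2 fun _ hi j => level_of_forall_bounds (hbounds j) hi⟩

end Transfer

section Delta

open Finset Filter

variable {e : ℕ}

/-- The runner to the left of runner `i` on an abacus with runners `0, …, e - 1`, cyclically. -/
def prevRunner (e i : ℕ) : ℕ := if i = 0 then e - 1 else i - 1

lemma prevRunner_lt {i : ℕ} (hi : i < e) : prevRunner e i < e := by
  unfold prevRunner
  split_ifs <;> omega

lemma prevRunner_modEq {i : ℕ} (hi : i < e) : (i : ℤ) - 1 ≡ prevRunner e i [ZMOD e] := by
  unfold prevRunner
  split_ifs with h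
  · exact Int.modEq_iff_dvd.2 ⟨1, by omega⟩
  · rw [Nat.cast_sub (by omega), Nat.cast_one]

lemma IsECore.runnerCount_beads {a M : ℤ} {lam : PartitionFun} (hcore : IsECore e a lam)
    (hM : IsCutoff (e * M) a lam) {i : ℕ} (hi : i < e) :
    runnerCount e (beads (e * M) a lam) i = level e a lam i + 1 - M := by
  have he : 0 < e := by omega
  have hMle : M - 1 ≤ level e a lam i := by
    refine (hcore.mul_add_mem_iff he).1 (hM.mem_betaSet_of_lt ?_)
    linarith [(Nat.cast_lt (α := ℤ)).2 hi]
  have hbeads : {x ∈ beads (e * M) a lam | x ≡ i [ZMOD e]} =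
      (Icc M (level e a lam i)).image fun q : ℤ => q * e + (i : ℤ) := by
    ext x
    simp only [mem_filter, mem_image, mem_Icc, hM.mem_beads]
    constructor
    · rintro ⟨⟨hx, hLx⟩, hres⟩
      have hmod : x % e = i := Eq.trans hres (Int.emod_eq_of_lt (by omega) (by omega))
      have hlevel := (hcore.mem_betaSet_iff he).1 hx
      rw [hmod, Int.toNat_natCast] at hlevel
      refine ⟨x / e, ⟨Int.le_ediv_of_mul_le (by omega) (by linarith), hlevel⟩, ?_⟩
      rw [← hmod, mul_comm, Int.mul_ediv_add_emod]
    · rintro ⟨q, ⟨hMq, hq⟩, rfl⟩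
      exact ⟨⟨(hcore.mul_add_mem_iff he).2 hq, by nlinarith⟩, mul_add_modEq q i⟩
  have hinj : Function.Injective fun q : ℤ => q * e + i := fun q q' h =>
    mul_right_cancel₀ (Int.natCast_ne_zero.2 he.ne') (add_right_cancel h)
  rw [runnerCount, hbeads, card_image_of_injective _ hinj, Int.card_Icc]
  omega

variable {r : ℕ} {a : Fin r → ℤ} {mu : Multipartition r}

lemma IsECore.delta_eq {j : Fin r} (hcore : IsECore e (a j) (mu j)) {i : ℕ} (hi : i < e) :
    delta e a mu i j = level e (a j) (mu j) i - level e (a j) (mu j) (prevRunner e i) -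
      if i = 0 then 1 else 0 := by
  obtain ⟨L, hL⟩ := eventually_atBot.1 (eventually_isCutoff (a j) (mu j))
  have hM := hL _ (Int.mul_ediv_self_le (x := L) (k := e) (by omega))
  have hzero : (e : ℤ) * (L / e) ≡ i [ZMOD e] ↔ i = 0 := by
    rw [Int.ModEq, Int.mul_emod_right, Int.emod_eq_of_lt (by omega) (by omega), eq_comm,
      Nat.cast_eq_zero]
  rw [AK.delta_eq hM, runnerCount_congr (prevRunner_modEq hi), hcore.runnerCount_beads hM hi,
    hcore.runnerCount_beads hM (prevRunner_lt hi)]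
  simp only [hzero]
  ring

lemma IsBaseTuple.sub_le_delta {a' : Fin r → ℤ} {b : ℕ → ℤ} (hbase : IsBaseTuple e a mu a' b)
    (hcore : IsMulticore e a mu) {i : ℕ} (hi : i < e) (j : Fin r) :
    b i - b (prevRunner e i) - (if i = 0 then 2 else 1) ≤ delta e a mu i j := by
  obtain ⟨m, rfl⟩ := hbase.exists_eq_add_mul
  rw [isBaseTuple_add_mul_iff (by omega)] at hbase
  have hcur := hbase i hi j
  have hprev := hbase _ (prevRunner_lt hi) j
  rw [(hcore j).delta_eq hi]
  split_ifs <;> omega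

-- Base tuples may be shifted, so the `sSup` in `Kconst` ranges over all of `ℤ` and takes a junk
-- value. This only normalises `b i`: every integer is the `i`-th entry of some base tuple.
lemma exists_isBaseTuple_Kconst_eq (hr : 0 < r) (hbase : ∃ a' b, IsBaseTuple e a mu a' b) {i : ℕ}
    (hi : i < e) :
    ∃ a' b, IsBaseTuple e a mu a' b ∧
      Kconst e a mu i = b i - b (prevRunner e i) - if i = 0 then 2 else 1 := by
  have he : 0 < e := by omega
  obtain ⟨a₀, b₀, hbase₀⟩ := hbase
  let Bi : ℤ := sSup {x | ∃ a' b, IsBaseTuple e a mu a' b ∧ b i = x}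
  let prevEntries : Set ℤ :=
    {x | ∃ a' b, IsBaseTuple e a mu a' b ∧ b i = Bi ∧ b (prevRunner e i) = x}
  have hne : prevEntries.Nonempty := by
    obtain ⟨a', b, hb, hbi⟩ := hbase₀.exists_apply_eq he i Bi
    exact ⟨_, a', b, hb, hbi, rfl⟩
  have hbdd : BddBelow prevEntries := by
    let j : Fin r := ⟨0, hr⟩
    refine ⟨level e (a j) (mu j) (prevRunner e i) - level e (a j) (mu j) i + Bi - 1, ?_⟩
    rintro x ⟨a', b, hb, hbi, rfl⟩
    obtain ⟨m, rfl⟩ := hb.exists_eq_add_mul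
    rw [isBaseTuple_add_mul_iff he] at hb
    have hcur := hb i hi j
    have hprev := hb _ (prevRunner_lt hi) j
    omega
  obtain ⟨a', b, hb, hbi, hbprev⟩ := Int.csInf_mem hne hbdd
  refine ⟨a', b, hb, ?_⟩
  rw [hbi, hbprev]
  rfl

end Delta

/-- inequality (3.5): `K_ī(C) ≤ d_ī(μ)` for every multipartition `μ`
lying in the core block `C` (given by a multicore `mu0` of minimal weight). -/
theorem stmt_8 {e r : ℕ} (he : 2 ≤ e) (hr : 0 < r) (a : Fin r → ℤ)
    (ibar : ℕ) (hibar : ibar < e)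
    (mu0 : Multipartition r) (hmu0core : IsMulticore e a mu0)
    (hmu0min : MinimalWeight e a mu0) :
    ∀ mu : Multipartition r, SameHub e a mu0 mu → MinimalWeight e a mu →
      Kconst e a mu0 ibar ≤ dmin e a mu (ibar : ℤ) := by
  intro mu hhub hmin
  have he' : 0 < e := Nat.zero_lt_of_lt he
  obtain ⟨a', b, hbase, hK⟩ :=
    exists_isBaseTuple_Kconst_eq hr (hmu0min.exists_isBaseTuple he') hibar
  obtain ⟨hcore, hbase'⟩ := hbase.isMulticore_and_isBaseTuple he' hmu0core hhub hmin
  refine le_csInf ⟨_, ⟨0, hr⟩, rfl⟩ ?_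
  rintro _ ⟨j, rfl⟩
  exact hK.trans_le (hbase'.sub_le_delta hcore hibar j)


end AK
end

section
/- Fix i ∈ {0,…,e−1}. Let μ be a multipartition lying in a core block C and let 0 ≤ h ≤ K_i(C). Let B be the block containing the multipartitions obtained from μ by adding h e-rim hooks. Then w(B) ≤ w(C) + K_i(C)·r; that is, the block B satisfies the Scopes-type condition w(B) ≤ w(C) + K_i r. -/
/-!
Combinatorial framework for multipartitions, residues, β-sets, abacus levels,
weights, hubs, core blocks and Scopes-type moves, following Fayers and the paper.
Rows and columns of Young diagrams are indexed from 0, so the node in row `b`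
and column `c` (0-based) of component `j` has residue `a j + c - b` mod `e`.
-/

open scoped Classical

namespace AK

/-!
Row `b` of component `j` consists of nodes of contents `a_j - b, …, β_b`, where `β_b` is the `b`-th
element of the β-set. Hence the number of its nodes of residue `i` is
`⌊(β_b - i) / e⌋ - ⌊(a_j - b - 1 - i) / e⌋`, and summing over rows shows that, up to a term
independent of the partition, `c_i` is the sum of `⌊(β - i) / e⌋` over a truncated β-set. Adding an
`e`-rim hook replaces one `β` by `β + e`, so it raises every `c_i` by exactly one. The differences
`c_i - c_{i+1}` do not change and the weight grows by exactly `r`, whence `w(B) = w(C) + h r`.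
-/

section RimHooks

open Filter Finset

theorem card_range_filter_add_emod_eq {e : ℕ} (he : 0 < e) (s i : ℤ) (p : ℕ) :
    (#{c ∈ range p | (s + (c : ℕ)) % (e : ℤ) = i % e} : ℤ) =
      (s + p - 1 - i) / e - (s - 1 - i) / e := by
  have image_eq : {c ∈ range p | (s + (c : ℕ)) % (e : ℤ) = i % e}.image (fun c : ℕ ↦ s + c) =
      {x ∈ Ioc (s - 1) (s + p - 1) | x ≡ i [ZMOD e]} := by
    ext x
    simp only [mem_image, mem_filter, Finset.mem_range, Finset.mem_Ioc]
    constructor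
    · rintro ⟨c, ⟨hc, hmod⟩, rfl⟩
      exact ⟨by omega, hmod⟩
    · rintro ⟨hx, hmod⟩
      have hsx : s + ((x - s).toNat : ℤ) = x := by omega
      exact ⟨(x - s).toNat, ⟨by omega, by rwa [hsx]⟩, hsx⟩
  have floor_mono : (s - 1 - i) / (e : ℤ) ≤ (s + p - 1 - i) / e :=
    Int.ediv_le_ediv (by exact_mod_cast he) (by omega)
  rw [← card_image_of_injective _ ((add_right_injective s).comp Nat.cast_injective),
    Function.comp_def, image_eq, Int.Ioc_filter_modEq_card _ _ (by exact_mod_cast he)]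
  simp only [← Int.cast_sub, Int.cast_natCast, Rat.floor_intCast_div_natCast]
  exact max_eq_left (sub_nonneg.mpr floor_mono)

theorem eventually_part_eq_zero (lam : PartitionFun) : ∀ᶠ N in atTop, lam.part N = 0 :=
  eventually_atTop.mpr lam.finite_support

/-- The element `β_b` of the β-set contributed by row `b`; since rows are indexed from `0`, it is
`λ_b + a_j - (b + 1)`. It is the content of the last node of that row. -/
def betaNum (aj : ℤ) (lam : PartitionFun) (b : ℕ) : ℤ :=
  (lam.part b : ℤ) + aj - ((b : ℤ) + 1)

theorem betaNum_strictAnti (aj : ℤ) (lam : PartitionFun) : StrictAnti (betaNum aj lam) := by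
  intro b b' hb
  have := lam.antitone hb.le
  simp only [betaNum]
  omega

theorem betaSet_eq_range_betaNum (aj : ℤ) (lam : PartitionFun) :
    betaSet aj lam = Set.range (betaNum aj lam) := by
  ext x
  simp only [betaSet, betaNum, Set.mem_ofPred_eq, Set.mem_range, eq_comm]

theorem betaSet_injective (aj : ℤ) : Function.Injective (betaSet aj) := by
  intro lam mu hbeta
  rw [betaSet_eq_range_betaNum, betaSet_eq_range_betaNum] at hbeta
  have hnum : betaNum aj lam = betaNum aj mu :=
    (betaNum_strictAnti aj lam).dual_right.range_inj (betaNum_strictAnti aj mu).dual_right |>.mp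
      hbeta
  have hpart : lam.part = mu.part := by
    ext b
    have := congrFun hnum b
    simp only [betaNum] at this
    omega
  cases lam
  cases mu
  congr

/-- The truncated β-set formed by the rows `0, …, N - 1`. -/
def betaFinset (aj : ℤ) (lam : PartitionFun) (N : ℕ) : Finset ℤ :=
  (range N).image (betaNum aj lam)

theorem mem_betaFinset {aj : ℤ} {lam : PartitionFun} {N : ℕ} (hN : lam.part N = 0) {y : ℤ} :
    y ∈ betaFinset aj lam N ↔ y ∈ betaSet aj lam ∧ aj - N ≤ y := by
  simp only [betaFinset, betaSet_eq_range_betaNum, mem_image, Finset.mem_range, Set.mem_range]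
  constructor
  · rintro ⟨b, hb, rfl⟩
    exact ⟨⟨b, rfl⟩, by simp only [betaNum]; omega⟩
  · rintro ⟨⟨b, rfl⟩, hy⟩
    refine ⟨b, ?_, rfl⟩
    by_contra! hb
    have := lam.antitone hb
    simp only [betaNum] at hy
    omega

theorem sum_betaFinset {M : Type*} [AddCommMonoid M] (aj : ℤ) (lam : PartitionFun) (N : ℕ)
    (F : ℤ → M) :
    ∑ y ∈ betaFinset aj lam N, F y = ∑ b ∈ range N, F (betaNum aj lam b) :=
  sum_image (betaNum_strictAnti aj lam).injective.injOn

theorem betaFinset_of_betaSet_eq_insert {aj β d : ℤ} {lam mu : PartitionFun} {N : ℕ} (hd : 0 ≤ d)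
    (hmu : mu.part N = 0) (hlam : lam.part N = 0) (hβN : aj - N ≤ β)
    (hbeta : betaSet aj lam = insert (β + d) (betaSet aj mu \ {β})) :
    betaFinset aj lam N = insert (β + d) ((betaFinset aj mu N).erase β) := by
  ext y
  have hnew : y = β + d → aj - N ≤ y := by omega
  simp only [mem_betaFinset hlam, hbeta, mem_insert, mem_erase, mem_betaFinset hmu,
    Set.mem_insert_iff, Set.mem_sdiff, Set.mem_singleton_iff]
  tauto

theorem sum_insert_erase {α M : Type*} [DecidableEq α] [AddCommGroup M] {s : Finset α} {x y : α}
    (hx : x ∈ s) (hy : y ∉ s) (F : α → M) :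
    ∑ z ∈ insert y (s.erase x), F z = ∑ z ∈ s, F z + (F y - F x) := by
  rw [sum_insert (mt mem_of_mem_erase hy), ← add_sum_erase s F hx]
  abel

variable {e r : ℕ} {a : Fin r → ℤ}

theorem nodeCount_eq_sum_card (a : Fin r → ℤ) {lam : Multipartition r} {N : ℕ}
    (hN : ∀ j, (lam j).part N = 0) (i : ℤ) :
    nodeCount e a lam i = ∑ j, ∑ b ∈ range N,
      #{c ∈ range ((lam j).part b) | (a j - b + (c : ℕ)) % (e : ℤ) = i % e} := by
  let node : (Σ _ : Fin r × ℕ, ℕ) → Node r := fun x ↦ (x.1.2, x.2, x.1.1)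
  have node_injective : Function.Injective node := by
    rintro ⟨⟨j, b⟩, c⟩ ⟨⟨j', b'⟩, c'⟩ h
    simp_all [node]
  have nodes_eq : {x : Node r | (lam x.2.2).InDiag x.1 x.2.1 ∧
      (a x.2.2 + (x.2.1 : ℤ) - (x.1 : ℤ)) % (e : ℤ) = i % e} =
      node '' ((univ ×ˢ range N).sigma fun p ↦
        {c ∈ range ((lam p.1).part p.2) | (a p.1 - p.2 + (c : ℕ)) % (e : ℤ) = i % e}) := by
    ext ⟨b, c, j⟩
    have row_lt (hc : c < (lam j).part b) : b < N := by
      by_contra! hb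
      exact absurd ((lam j).antitone hb) (by rw [hN]; omega)
    simpa [node, PartitionFun.InDiag, sub_add_eq_add_sub] using fun hc _ ↦ row_lt hc
  rw [nodeCount, nodes_eq, Set.ncard_image_of_injective _ node_injective, Set.ncard_coe_finset,
    card_sigma, sum_product]

theorem nodeCount_eq_sum_betaFinset (he : 0 < e) (a : Fin r → ℤ) {lam : Multipartition r} {N : ℕ}
    (hN : ∀ j, (lam j).part N = 0) (i : ℤ) :
    (nodeCount e a lam i : ℤ) = ∑ j, (∑ y ∈ betaFinset (a j) (lam j) N, (y - i) / (e : ℤ) -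
      ∑ b ∈ range N, (a j - b - 1 - i) / (e : ℤ)) := by
  rw [nodeCount_eq_sum_card a hN]
  push_cast
  refine sum_congr rfl fun j _ ↦ ?_
  rw [sum_betaFinset, ← sum_sub_distrib]
  refine sum_congr rfl fun b _ ↦ ?_
  rw [card_range_filter_add_emod_eq he, betaNum]
  congr 3
  ring

theorem AddRimHook.pos {mu lam : Multipartition r} (h : AddRimHook e a mu lam) : 0 < e := by
  obtain ⟨j, β, hβ, hβe, -⟩ := h
  rw [Nat.pos_iff_ne_zero]
  rintro rfl
  exact hβe (by simpa using hβ)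

theorem AddRimHook.nodeCount_eq {mu lam : Multipartition r} (h : AddRimHook e a mu lam) (i : ℤ) :
    nodeCount e a lam i = nodeCount e a mu i + 1 := by
  have he := h.pos
  obtain ⟨j, β, hβ, hβe, hj, hne⟩ := h
  obtain ⟨N, hmu, hlam, hβN⟩ : ∃ N : ℕ, (∀ k, (mu k).part N = 0) ∧ (∀ k, (lam k).part N = 0) ∧
      a j - N ≤ β :=
    ((eventually_all.mpr fun k ↦ eventually_part_eq_zero (mu k)).and
      ((eventually_all.mpr fun k ↦ eventually_part_eq_zero (lam k)).and
        (eventually_atTop.mpr ⟨(a j - β).toNat, fun N hN ↦ by omega⟩))).exists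
  have floor_sum_j : ∑ y ∈ betaFinset (a j) (lam j) N, (y - i) / (e : ℤ) =
      ∑ y ∈ betaFinset (a j) (mu j) N, (y - i) / (e : ℤ) + 1 := by
    rw [betaFinset_of_betaSet_eq_insert (by omega) (hmu j) (hlam j) hβN hj,
      sum_insert_erase ((mem_betaFinset (hmu j)).mpr ⟨hβ, hβN⟩)
        fun hmem ↦ hβe ((mem_betaFinset (hmu j)).mp hmem).1,
      add_sub_right_comm, Int.add_ediv_of_dvd_right dvd_rfl, Int.ediv_self (by omega),
      add_sub_cancel_left]
  have lam_eq (k : Fin r) (hk : k ≠ j) : lam k = mu k := betaSet_injective _ (hne k hk)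
  have count_sub : (nodeCount e a lam i : ℤ) - nodeCount e a mu i = 1 := by
    rw [nodeCount_eq_sum_betaFinset he a hlam, nodeCount_eq_sum_betaFinset he a hmu,
      ← sum_sub_distrib, sum_eq_single j (fun k _ hk ↦ by rw [lam_eq k hk, sub_self]) (by simp),
      floor_sum_j]
    ring
  omega

theorem AddRimHook.weight_eq {mu lam : Multipartition r} (h : AddRimHook e a mu lam) :
    weight e a lam = weight e a mu + r := by
  simp only [weight, h.nodeCount_eq, Nat.cast_add, Nat.cast_one, sum_add_distrib,
    add_sub_add_right_eq_sub, sum_const, card_univ, Fintype.card_fin, nsmul_one]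
  ring

theorem stmt_12_general {seq : ℕ → Multipartition r} {h : ℕ}
    (hseq : ∀ t < h, AddRimHook e a (seq t) (seq (t + 1))) :
    weight e a (seq h) = weight e a (seq 0) + h * r := by
  induction h with
  | zero => simp
  | succ h ih =>
    rw [(hseq h h.lt_succ_self).weight_eq, ih fun t ht ↦ hseq t (ht.trans h.lt_succ_self)]
    push_cast
    ring

end RimHooks

/-- Theorem 5.2: fix `i ∈ {0,…,e−1}`, let `μ` lie in a core block
`C`, let `0 ≤ h ≤ K_i(C)` and let `λ` be obtained from `μ` by adding `h` `e`-rim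
hooks. Then the block of `λ` satisfies `w(B) ≤ w(C) + K_i(C)·r`. -/
theorem stmt_12 {e r : ℕ} (he : 2 ≤ e) (hr : 0 < r) (a : Fin r → ℤ)
    (i : ℕ) (hi : i < e)
    (mu : Multipartition r) (hmucore : IsMulticore e a mu)
    (hmumin : MinimalWeight e a mu)
    (h : ℕ) (hhK : (h : ℤ) ≤ Kconst e a mu i)
    (lam : Multipartition r)
    (hadd : ∃ seq : ℕ → Multipartition r, seq 0 = mu ∧ seq h = lam ∧
      ∀ t < h, AddRimHook e a (seq t) (seq (t + 1))) :
    weight e a lam ≤ weight e a mu + (Kconst e a mu i : ℚ) * (r : ℚ) := by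
  obtain ⟨seq, rfl, rfl, hseq⟩ := hadd
  rw [stmt_12_general hseq]
  gcongr
  exact_mod_cast hhK

end AK
end
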